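/- arXiv:1501.04323 — 3 statements merged into one kernel-verified Lean document; each statement's English description precedes it below -/
import Mathlib

section
/- Let a : ℕ → ℤ be the sequence defined by a(m) = μ(k) if m = k² for some k ∈ ℕ, and a(m) = 0 otherwise. Let T denote the left shift on sequences, (T x)(m) = x(m+1), and let f be the evaluation at the zeroth coordinate, f(x) = x(0). Then the averages (1/N) ∑_{n=1}^{N} μ(n) · f(T^{n²} a) = (1/N) ∑_{n=1}^{N} μ(n) · a(n²) converge to 6/π² as N → ∞; in particular this limit is nonzero, so the polynomial Sarnak conjecture fails for the (non-minimal) subshift generated by a with the polynomial p(n) = n². -/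
/-!
Since `f(T^{n²} a) = a(n²) = μ(n)`, the averages are those of `μ(n)²`, the indicator function of
the squarefree numbers, so the claim is that the squarefree numbers have density `6/π²`.

Writing `n = b² c` with `c` squarefree, `d² ∣ n` is equivalent to `d ∣ b`, and Möbius inversion
gives `μ(n)² = ∑_{d² ∣ n} μ(d)`. Summing over `n ≤ N` yields `∑_d μ(d) ⌊N / d²⌋`
(`sum_moebius_sq`). After division by `N` the `d`-th term tends to `μ(d) / d²` and is dominated by
`1 / d²`, so the averages tend to `∑_d μ(d) / d² = 1 / ζ(2) = 6 / π²`.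
-/

open Filter Finset

/-- The sequence `a` with `a(m) = μ(k)` if `m = k²` and `a(m) = 0` otherwise. -/
noncomputable def sarnakCounterexampleSeq : ℕ → ℤ := fun m =>
  if (Nat.sqrt m) ^ 2 = m then ArithmeticFunction.moebius (Nat.sqrt m) else 0

/-- The left shift on sequences `x : ℕ → ℤ`. -/
def leftShift : (ℕ → ℤ) → (ℕ → ℤ) := fun x m => x (m + 1)

/-- Evaluation at the zeroth coordinate. -/
def eval₀ : (ℕ → ℤ) → ℤ := fun x => x 0

lemma eval₀_leftShift_iterate (x : ℕ → ℤ) (k : ℕ) : eval₀ (leftShift^[k] x) = x k := by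
  suffices h : ∀ m, (leftShift^[k] x) m = x (m + k) by simpa [eval₀] using h 0
  induction k generalizing x with
  | zero => simp
  | succ k ih =>
    intro m
    rw [Function.iterate_succ_apply, ih]
    simp [leftShift, add_assoc]

lemma sarnakCounterexampleSeq_sq (n : ℕ) :
    sarnakCounterexampleSeq (n ^ 2) = ArithmeticFunction.moebius n := by
  simp [sarnakCounterexampleSeq, Nat.sqrt_eq']

/-- The squarefree part `c` contributes no square divisors. -/
lemma sq_dvd_sq_mul_iff {b c d : ℕ} (hc : Squarefree c) (hb : b ≠ 0) :
    d ^ 2 ∣ b ^ 2 * c ↔ d ∣ b := by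
  refine ⟨fun h => ?_, fun h => (pow_dvd_pow_of_dvd h 2).mul_right c⟩
  have hd : d ≠ 0 := by
    rintro rfl
    simp [hb, hc.ne_zero] at h
  rw [← Nat.factorization_le_iff_dvd hd hb]
  intro p
  have h1 := (Nat.factorization_le_iff_dvd (pow_ne_zero 2 hd)
    (mul_ne_zero (pow_ne_zero 2 hb) hc.ne_zero)).2 h p
  have h2 := hc.natFactorization_le_one p
  rw [Nat.factorization_mul (pow_ne_zero 2 hb) hc.ne_zero] at h1
  simp only [Nat.factorization_pow, Finsupp.add_apply, Finsupp.smul_apply, smul_eq_mul] at h1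
  omega

lemma moebius_sq_eq_sum {n N : ℕ} (hn : n ≠ 0) (hN : n ≤ N) :
    ArithmeticFunction.moebius n ^ 2 =
      ∑ d ∈ range (N + 1), if d ^ 2 ∣ n then ArithmeticFunction.moebius d else 0 := by
  obtain ⟨c, b, rfl, hc⟩ := Nat.sq_mul_squarefree n
  have hb : b ≠ 0 := by
    rintro rfl
    simp at hn
  have hbN : b ≤ N := by
    have : 0 < c := Nat.pos_of_ne_zero hc.ne_zero
    nlinarith [Nat.pos_of_ne_zero hb]
  simp_rw [sq_dvd_sq_mul_iff hc hb]
  rw [← Finset.sum_filter]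
  have hdiv : (range (N + 1)).filter (fun d => d ∣ b) = b.divisors := by
    ext d
    simp only [mem_filter, mem_range, Nat.mem_divisors]
    exact ⟨fun h => ⟨h.2, hb⟩, fun h => ⟨by have := Nat.le_of_dvd (by omega) h.1; omega, h.1⟩⟩
  rw [hdiv, ← ArithmeticFunction.coe_mul_zeta_apply, ArithmeticFunction.moebius_mul_coe_zeta,
    ArithmeticFunction.one_apply]
  split_ifs with h
  · subst h
    rw [one_pow, one_mul, ArithmeticFunction.moebius_sq_eq_one_of_squarefree hc]
  · have : ¬ Squarefree (b ^ 2 * c) := fun hs =>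
      h (Nat.isUnit_iff.1 (hs b ⟨c, by ring⟩))
    simp [ArithmeticFunction.moebius_eq_zero_of_not_squarefree this]

/-- Each `d` is counted once for every multiple of `d²` up to `N`; for `d = 0` the junk value
`N / 0 = 0` is harmless, as it agrees with `μ(0) = 0`. -/
lemma sum_moebius_sq (N : ℕ) :
    ∑ n ∈ Icc 1 N, ArithmeticFunction.moebius n ^ 2 =
      ∑ d ∈ range (N + 1), ArithmeticFunction.moebius d * ((N / d ^ 2 : ℕ) : ℤ) := by
  have : ∀ n ∈ Icc 1 N, ArithmeticFunction.moebius n ^ 2 =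
      ∑ d ∈ range (N + 1), if d ^ 2 ∣ n then ArithmeticFunction.moebius d else 0 := by
    intro n hn
    rw [mem_Icc] at hn
    exact moebius_sq_eq_sum (by omega) hn.2
  rw [Finset.sum_congr rfl this, Finset.sum_comm]
  refine Finset.sum_congr rfl fun d _ => ?_
  rw [← Finset.sum_filter, Finset.sum_const, nsmul_eq_mul, mul_comm]
  congr 2
  rw [← Nat.Ioc_filter_dvd_card_eq_div]
  rfl

lemma tsum_moebius_div_sq :
    ∑' d : ℕ, (ArithmeticFunction.moebius d : ℝ) / (d : ℝ) ^ 2 = 6 / Real.pi ^ 2 := by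
  have h2 : (1 : ℝ) < (2 : ℂ).re := by norm_num
  have h := ArithmeticFunction.LSeries_zeta_mul_Lseries_moebius h2
  rw [ArithmeticFunction.LSeries_zeta_eq_riemannZeta h2, riemannZeta_two] at h
  have hL : LSeries (fun n => (ArithmeticFunction.moebius n : ℂ)) 2 =
      ((∑' d : ℕ, (ArithmeticFunction.moebius d : ℝ) / (d : ℝ) ^ 2 : ℝ) : ℂ) := by
    rw [LSeries, Complex.ofReal_tsum]
    refine tsum_congr fun d => ?_
    rcases eq_or_ne d 0 with rfl | hd
    · simp
    · rw [LSeries.term_of_ne_zero hd]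
      push_cast
      norm_cast
  rw [hL] at h
  have h' : Real.pi ^ 2 / 6 * ∑' d : ℕ, (ArithmeticFunction.moebius d : ℝ) / (d : ℝ) ^ 2 = 1 := by
    exact_mod_cast h
  have hpi := Real.pi_ne_zero
  field_simp at h' ⊢
  linarith

lemma abs_term_le (N d : ℕ) :
    |(ArithmeticFunction.moebius d : ℝ) * ((N / d ^ 2 : ℕ) : ℝ) / N| ≤ 1 / (d : ℝ) ^ 2 := by
  have h1 : |(ArithmeticFunction.moebius d : ℝ)| ≤ 1 := by
    exact_mod_cast ArithmeticFunction.abs_moebius_le_one (n := d)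
  have h2 : ((N / d ^ 2 : ℕ) : ℝ) ≤ N / (d : ℝ) ^ 2 := by
    exact_mod_cast Nat.cast_div_le (α := ℝ) (m := N) (n := d ^ 2)
  rw [abs_div, abs_mul, Nat.abs_cast, Nat.abs_cast]
  rcases eq_or_ne N 0 with rfl | hN
  · simp
  have hN' : (0 : ℝ) < N := by positivity
  rw [div_le_iff₀ hN']
  calc _ ≤ 1 * (N / (d : ℝ) ^ 2) := by gcongr
    _ = _ := by ring

lemma tendsto_term (d : ℕ) :
    Tendsto (fun N : ℕ => (ArithmeticFunction.moebius d : ℝ) * ((N / d ^ 2 : ℕ) : ℝ) / N) atTop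
      (nhds ((ArithmeticFunction.moebius d : ℝ) / (d : ℝ) ^ 2)) := by
  have h := (tendsto_nat_floor_mul_div_atTop (R := ℝ) (a := 1 / (d : ℝ) ^ 2) (by positivity)).comp
    tendsto_natCast_atTop_atTop
  have h' := h.const_mul (ArithmeticFunction.moebius d : ℝ)
  rw [mul_one_div] at h'
  refine h'.congr fun N => ?_
  have : ⌊1 / (d : ℝ) ^ 2 * N⌋₊ = N / d ^ 2 := by
    rw [one_div_mul_eq_div, ← Nat.cast_pow, Nat.floor_div_eq_div]
  simp only [Function.comp_apply, this, mul_div_assoc]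

/-- **Counterexample to the polynomial Sarnak conjecture without minimality**:
for the shift orbit of the sequence `a` (with `a(k²) = μ(k)` and `a(m) = 0` for
non-square `m`) and the polynomial `p(n) = n²`, the weighted averages
`(1/N) ∑_{n=1}^{N} μ(n) f(T^{n²} a) = (1/N) ∑_{n=1}^{N} μ(n) a(n²)`
converge to `6/π² ≠ 0`. -/
theorem polynomial_sarnak_fails_nonminimal :
    Tendsto
      (fun N : ℕ => (1 / (N : ℝ)) *
        ∑ n ∈ Finset.Icc 1 N,
          (ArithmeticFunction.moebius n : ℝ) *
            (eval₀ (leftShift^[n ^ 2] sarnakCounterexampleSeq) : ℝ))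
      atTop (nhds (6 / Real.pi ^ 2)) := by
  simp_rw [eval₀_leftShift_iterate, sarnakCounterexampleSeq_sq, ← sq]
  rw [← tsum_moebius_div_sq]
  have hmain := tendsto_tsum_of_dominated_convergence (𝓕 := atTop)
    (f := fun (N d : ℕ) => (ArithmeticFunction.moebius d : ℝ) * ((N / d ^ 2 : ℕ) : ℝ) / N)
    (Real.summable_one_div_nat_pow.2 one_lt_two) tendsto_term
    (Eventually.of_forall fun N d => abs_term_le N d)
  refine hmain.congr fun N => ?_
  have hsum : ∑ n ∈ Icc 1 N, (ArithmeticFunction.moebius n : ℝ) ^ 2 =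
      ∑ d ∈ range (N + 1), (ArithmeticFunction.moebius d : ℝ) * ((N / d ^ 2 : ℕ) : ℝ) := by
    simpa only [Int.cast_sum, Int.cast_pow, Int.cast_mul, Int.cast_natCast] using
      congrArg (Int.cast : ℤ → ℝ) (sum_moebius_sq N)
  rw [hsum, one_div_mul_eq_div, Finset.sum_div]
  refine tsum_eq_sum fun d hd => ?_
  -- Beyond `d = N` the floor vanishes because `d² > N`.
  have hd' : N < d := by simpa using hd
  rw [Nat.div_eq_of_lt (by nlinarith)]
  simp
end

section
/- Let X be a compact topological space, T : X → X continuous, f : X → ℂ continuous, x ∈ X, and let p be a polynomial with integer coefficients satisfying p(n) ≥ 0 for all n ∈ ℕ. Suppose that for all distinct primes q₁ and q₂, the averages (1/N) ∑_{n=1}^{N} f(T^{p(n q₁)} x) · conj(f(T^{p(n q₂)} x)) converge to 0 as N → ∞. Then the averages (1/N) ∑_{n=1}^{N} μ(n) · f(T^{p(n)} x) converge to 0 as N → ∞. (Sufficiency of the Kátai–Bourgain–Sarnak–Ziegler orthogonality criterion for the polynomial Sarnak property.) -/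
/-!
The Kátai–Bourgain–Sarnak–Ziegler argument.  Only boundedness of the sequence
`a n = f (T^{p(n)} x)` matters, say `‖a n‖ ≤ C`.

Fix a finite set `P` of primes, put `S = ∑_{q ∈ P} 1/q` and let `ω n` be the number of `q ∈ P`
dividing `n`.  By the Turán–Kubilius inequality (`turan_kubilius`), `ω` is close to `S` in mean
square, so `S ∑ μ(n) a(n)` is close to `∑ μ(n) a(n) ω(n) = ∑_{q ∈ P} ∑_{mq ≤ N} μ(mq) a(mq)`.
Up to the terms with `q ∣ m`, which contribute at most `C N ∑ 1/q²` (`moebius_error`), one may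
replace `μ(mq)` by `-μ(m)`.  Cauchy–Schwarz in `m` then removes `μ(m)` and leaves the
correlations `∑_m a(mq) conj(a(mr))` (`bilinear_bound`): the diagonal ones are at most `C² N S`
in total and the off-diagonal ones are `o(N)` by hypothesis.  Altogether
`limsup |(1/N) ∑ μ(n) a(n)|² = O(1/S)`, and `S` can be taken arbitrarily large since the sum of
the reciprocals of the primes diverges.
-/

open Filter Finset

namespace KBSZ

/-- The number of elements of `P` dividing `n`, as a real number. -/
noncomputable def omegaP (P : Finset ℕ) (n : ℕ) : ℝ := ∑ q ∈ P, if q ∣ n then 1 else 0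

/-- The sum of the reciprocals of the elements of `P`. -/
noncomputable def recipSum (P : Finset ℕ) : ℝ := ∑ q ∈ P, 1 / (q : ℝ)

/-- The correlation of the dilates `a (m q)` and `a (m r)`, over all `m ≥ 1` for which both
`m q` and `m r` are at most `N`. -/
noncomputable def corr (a : ℕ → ℂ) (q r N : ℕ) : ℂ :=
  ∑ m ∈ Icc 1 (N / max q r), a (m * q) * (starRingEnd ℂ) (a (m * r))

/-- The total size of the off-diagonal correlations. -/
noncomputable def offDiag (a : ℕ → ℂ) (P : Finset ℕ) (N : ℕ) : ℝ :=
  ∑ q ∈ P, ∑ r ∈ P, if q = r then 0 else ‖corr a q r N‖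

/-! ### Turán–Kubilius inequality -/

lemma recipSum_nonneg (P : Finset ℕ) : 0 ≤ recipSum P :=
  Finset.sum_nonneg fun _ _ => by positivity

lemma count_dvd (N d : ℕ) : (∑ n ∈ Icc 1 N, if d ∣ n then (1 : ℝ) else 0) = ((N / d : ℕ) : ℝ) := by
  rw [← Nat.Ioc_filter_dvd_card_eq_div, Finset.sum_boole]
  rfl

lemma sum_dvd_reindex {M : Type*} [AddCommMonoid M] (N q : ℕ) (hq : 0 < q) (g : ℕ → M) :
    (∑ n ∈ Icc 1 N, if q ∣ n then g n else 0) =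
      ∑ m ∈ Icc 1 N, if m * q ≤ N then g (m * q) else 0 := by
  rw [← Finset.sum_filter, ← Finset.sum_filter]
  refine Finset.sum_nbij' (fun n => n / q) (fun m => m * q) ?_ ?_ ?_ ?_ ?_
  · intro n hn
    simp only [Finset.mem_filter, Finset.mem_Icc] at hn ⊢
    obtain ⟨⟨h1, h2⟩, h3⟩ := hn
    rw [Nat.div_mul_cancel h3]
    exact ⟨⟨Nat.div_pos (Nat.le_of_dvd h1 h3) hq, (Nat.div_le_self _ _).trans h2⟩, h2⟩
  · intro m hm
    simp only [Finset.mem_filter, Finset.mem_Icc] at hm ⊢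
    exact ⟨⟨Nat.mul_pos hm.1.1 hq, hm.2⟩, Dvd.intro_left m rfl⟩
  · intro n hn
    exact Nat.div_mul_cancel (Finset.mem_filter.1 hn).2
  · intro m _
    exact Nat.mul_div_cancel m hq
  · intro n hn
    simp only [Nat.div_mul_cancel (Finset.mem_filter.1 hn).2]

lemma sum_omegaP_lower (P : Finset ℕ) (N : ℕ) :
    N * recipSum P - #P ≤ ∑ n ∈ Icc 1 N, omegaP P n := by
  unfold omegaP recipSum
  rw [Finset.sum_comm]
  simp_rw [count_dvd]
  have : (N : ℝ) * (∑ q ∈ P, 1 / (q : ℝ)) - #P = ∑ q ∈ P, ((N : ℝ) / q - 1) := by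
    rw [Finset.sum_sub_distrib, Finset.mul_sum]; simp [div_eq_mul_inv]
  rw [this]
  refine Finset.sum_le_sum fun q _ => ?_
  rw [← Nat.floor_div_eq_div (K := ℝ)]
  exact (Nat.sub_one_lt_floor _).le

lemma sum_omegaP_sq (P : Finset ℕ) (hP : ∀ q ∈ P, q.Prime) (N : ℕ) :
    ∑ n ∈ Icc 1 N, omegaP P n ^ 2 ≤ N * recipSum P ^ 2 + N * recipSum P := by
  have h1 : ∑ n ∈ Icc 1 N, omegaP P n ^ 2 =
      ∑ q ∈ P, ∑ r ∈ P, ∑ n ∈ Icc 1 N, if q ∣ n ∧ r ∣ n then (1 : ℝ) else 0 := by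
    unfold omegaP
    simp_rw [sq, Finset.sum_mul_sum]
    rw [Finset.sum_comm]
    refine Finset.sum_congr rfl fun q _ => ?_
    rw [Finset.sum_comm]
    refine Finset.sum_congr rfl fun r _ => Finset.sum_congr rfl fun n _ => ?_
    by_cases h : q ∣ n <;> by_cases h' : r ∣ n <;> simp [h, h']
  have h2 : N * recipSum P ^ 2 + N * recipSum P =
      ∑ q ∈ P, ∑ r ∈ P, ((N : ℝ) * (1 / q * (1 / r)) + if q = r then (N : ℝ) * (1 / q) else 0) := by
    simp_rw [Finset.sum_add_distrib, ← Finset.mul_sum, ← Finset.sum_mul]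
    unfold recipSum
    rw [sq]
    congr 1
    rw [Finset.mul_sum]
    refine Finset.sum_congr rfl fun q hq => ?_
    rw [Finset.sum_ite_eq P q, if_pos hq]
  rw [h1, h2]
  refine Finset.sum_le_sum fun q hq => Finset.sum_le_sum fun r hr => ?_
  by_cases h : q = r
  · subst h
    simp only [and_self, if_true, count_dvd]
    have : ((N / q : ℕ) : ℝ) ≤ N / q := Nat.cast_div_le
    have h0 : 0 ≤ (N : ℝ) * (1 / q * (1 / q)) := by positivity
    rw [mul_one_div (N : ℝ) (q : ℝ)]; linarith
  · have hc : Nat.Coprime q r := (Nat.coprime_primes (hP q hq) (hP r hr)).2 h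
    have hiff : ∀ n, (q ∣ n ∧ r ∣ n) ↔ q * r ∣ n := fun n =>
      ⟨fun hn => hc.mul_dvd_of_dvd_of_dvd hn.1 hn.2,
        fun hn => ⟨dvd_of_mul_right_dvd hn, dvd_of_mul_left_dvd hn⟩⟩
    simp_rw [hiff]
    rw [count_dvd, if_neg h, add_zero]
    refine Nat.cast_div_le.trans (le_of_eq ?_)
    push_cast
    rw [one_div_mul_one_div, mul_one_div]

/-- The Turán–Kubilius inequality for a finite set of primes. -/
lemma turan_kubilius (P : Finset ℕ) (hP : ∀ q ∈ P, q.Prime) (N : ℕ) :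
    ∑ n ∈ Icc 1 N, (omegaP P n - recipSum P) ^ 2 ≤
      N * recipSum P + 2 * recipSum P * #P := by
  have h1 := sum_omegaP_lower P N
  have h2 := sum_omegaP_sq P hP N
  have h3 : ∑ n ∈ Icc 1 N, (omegaP P n - recipSum P) ^ 2 =
      ∑ n ∈ Icc 1 N, omegaP P n ^ 2 - 2 * recipSum P * ∑ n ∈ Icc 1 N, omegaP P n
        + N * recipSum P ^ 2 := by
    simp_rw [sub_sq, Finset.sum_add_distrib, Finset.sum_sub_distrib, Finset.mul_sum]
    simp only [Finset.sum_const, Nat.card_Icc, add_tsub_cancel_right, nsmul_eq_mul]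
    congr 2
    exact Finset.sum_congr rfl fun _ _ => by ring
  have h4 := mul_le_mul_of_nonneg_left h1 (recipSum_nonneg P)
  rw [h3]; nlinarith

/-! ### The Möbius function at multiples of a prime, and Cauchy–Schwarz -/

lemma norm_moebius_le (n : ℕ) : ‖(ArithmeticFunction.moebius n : ℂ)‖ ≤ 1 := by
  rw [Complex.norm_intCast]
  exact_mod_cast ArithmeticFunction.abs_moebius_le_one

lemma norm_moebius_mul_prime (m q : ℕ) (hq : q.Prime) :
    ‖(ArithmeticFunction.moebius (m * q) : ℂ) + ArithmeticFunction.moebius m‖ ≤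
      if q ∣ m then 1 else 0 := by
  split_ifs with h
  · have : ¬ Squarefree (m * q) := fun hs =>
      hq.one_lt.ne' (Nat.isUnit_iff.1 (hs q (Nat.mul_dvd_mul_right h q)))
    rw [ArithmeticFunction.moebius_eq_zero_of_not_squarefree this]
    simpa using norm_moebius_le m
  · have hc : Nat.Coprime m q := ((Nat.Prime.coprime_iff_not_dvd hq).2 h).symm
    rw [ArithmeticFunction.isMultiplicative_moebius.map_mul_of_coprime hc,
      ArithmeticFunction.moebius_apply_prime hq]
    simp

/-- Cauchy–Schwarz with a weight of modulus at most `C`. -/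
lemma norm_sum_sq_le (N : ℕ) (u v : ℕ → ℂ) (C : ℝ) (hu : ∀ n, ‖u n‖ ≤ C) :
    ‖∑ n ∈ Icc 1 N, u n * v n‖ ^ 2 ≤ C ^ 2 * N * ∑ n ∈ Icc 1 N, ‖v n‖ ^ 2 := by
  have h1 : ‖∑ n ∈ Icc 1 N, u n * v n‖ ≤ ∑ n ∈ Icc 1 N, ‖u n‖ * ‖v n‖ :=
    (norm_sum_le _ _).trans (le_of_eq (by simp))
  have h2 : ∑ n ∈ Icc 1 N, ‖u n‖ ^ 2 ≤ C ^ 2 * N := by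
    refine (Finset.sum_le_card_nsmul _ _ (C ^ 2) fun n _ => ?_).trans (le_of_eq ?_)
    · exact pow_le_pow_left₀ (norm_nonneg _) (hu n) 2
    · simp [mul_comm]
  calc _ ≤ (∑ n ∈ Icc 1 N, ‖u n‖ * ‖v n‖) ^ 2 := pow_le_pow_left₀ (norm_nonneg _) h1 2
    _ ≤ (∑ n ∈ Icc 1 N, ‖u n‖ ^ 2) * ∑ n ∈ Icc 1 N, ‖v n‖ ^ 2 :=
      Finset.sum_mul_sq_le_sq_mul_sq _ _ _
    _ ≤ _ := by gcongr

/-- The cost of replacing `μ(mq)` by `-μ(m)`: only the `m` divisible by `q` contribute. -/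
lemma moebius_error (a : ℕ → ℂ) (C : ℝ) (ha : ∀ n, ‖a n‖ ≤ C) (P : Finset ℕ)
    (hP : ∀ q ∈ P, q.Prime) (N : ℕ) :
    ‖∑ q ∈ P, ∑ m ∈ Icc 1 N, if m * q ≤ N then
      ((ArithmeticFunction.moebius (m * q) : ℂ) + ArithmeticFunction.moebius m) * a (m * q)
        else 0‖ ≤ C * N * ∑' n : ℕ, 1 / (n : ℝ) ^ 2 := by
  have hC : 0 ≤ C := (norm_nonneg _).trans (ha 0)
  have hS : Summable fun n : ℕ => 1 / (n : ℝ) ^ 2 := Real.summable_one_div_nat_pow.2 one_lt_two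
  have h1 : ∑ q ∈ P, 1 / (q : ℝ) ^ 2 ≤ ∑' n : ℕ, 1 / (n : ℝ) ^ 2 :=
    hS.sum_le_tsum P fun _ _ => by positivity
  refine le_trans ?_ (mul_le_mul_of_nonneg_left h1 (by positivity))
  rw [Finset.mul_sum]
  refine (norm_sum_le _ _).trans (Finset.sum_le_sum fun q hq => ?_)
  have hq' := hP q hq
  rw [← Finset.sum_filter]
  have hfil : (Icc 1 N).filter (fun m => m * q ≤ N) = Icc 1 (N / q) := by
    ext m
    simp only [Finset.mem_filter, Finset.mem_Icc, Nat.le_div_iff_mul_le hq'.pos]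
    have := Nat.le_mul_of_pos_right m hq'.pos
    constructor
    · rintro ⟨⟨h1, _⟩, h2⟩; exact ⟨h1, h2⟩
    · rintro ⟨h1, h2⟩; exact ⟨⟨h1, this.trans h2⟩, h2⟩
  rw [hfil]
  calc _ ≤ ∑ m ∈ Icc 1 (N / q), (if q ∣ m then (1 : ℝ) else 0) * C := by
        refine (norm_sum_le _ _).trans (Finset.sum_le_sum fun m _ => ?_)
        rw [norm_mul]
        exact mul_le_mul (norm_moebius_mul_prime m q hq') (ha _) (norm_nonneg _)
          (by split_ifs <;> norm_num)
    _ = ((N / q / q : ℕ) : ℝ) * C := by rw [← Finset.sum_mul, count_dvd]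
    _ ≤ (N : ℝ) / q / q * C := by
        gcongr
        exact Nat.cast_div_le.trans (by gcongr; exact Nat.cast_div_le)
    _ = C * N * (1 / (q : ℝ) ^ 2) := by
        rw [div_div, ← sq]; ring

/-! ### Correlations of dilates -/

lemma sum_corr (a : ℕ → ℂ) (q r N : ℕ) (hq : 0 < q) :
    (∑ m ∈ Icc 1 N, (if m * q ≤ N then a (m * q) else 0) *
      (starRingEnd ℂ) (if m * r ≤ N then a (m * r) else 0)) = corr a q r N := by
  unfold corr
  have hfil : Icc 1 (N / max q r) = (Icc 1 N).filter (fun m => m * q ≤ N ∧ m * r ≤ N) := by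
    ext m
    simp only [Finset.mem_filter, Finset.mem_Icc,
      Nat.le_div_iff_mul_le (lt_of_lt_of_le hq (le_max_left q r)),
      ← Nat.mul_max_mul_left, max_le_iff]
    have := Nat.le_mul_of_pos_right m hq
    constructor
    · rintro ⟨h1, h2, h3⟩; exact ⟨⟨h1, this.trans h2⟩, h2, h3⟩
    · rintro ⟨⟨h1, _⟩, h2, h3⟩; exact ⟨h1, h2, h3⟩
  rw [hfil, Finset.sum_filter]
  refine Finset.sum_congr rfl fun m _ => ?_
  by_cases h : m * q ≤ N <;> by_cases h' : m * r ≤ N <;> simp [h, h']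

lemma norm_corr_self_le (a : ℕ → ℂ) (C : ℝ) (ha : ∀ n, ‖a n‖ ≤ C) (q N : ℕ) :
    ‖corr a q q N‖ ≤ C ^ 2 * N * (1 / q) := by
  unfold corr
  rw [max_self]
  have h : ∀ m ∈ Icc 1 (N / q), ‖a (m * q) * (starRingEnd ℂ) (a (m * q))‖ ≤ C ^ 2 := by
    intro m _
    rw [norm_mul, RCLike.norm_conj, ← sq]
    exact pow_le_pow_left₀ (norm_nonneg _) (ha _) 2
  refine (norm_sum_le_of_le _ h).trans ?_
  have h2 : ((N / q : ℕ) : ℝ) ≤ N / q := Nat.cast_div_le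
  simp only [Finset.sum_const, Nat.card_Icc, add_tsub_cancel_right, nsmul_eq_mul]
  calc _ ≤ (N : ℝ) / q * C ^ 2 := by gcongr
    _ = _ := by ring

/-- The mean square of `m ↦ ∑_{q ∈ P, mq ≤ N} a(mq)`, split into diagonal and off-diagonal
correlations. -/
lemma bilinear_bound (a : ℕ → ℂ) (C : ℝ) (ha : ∀ n, ‖a n‖ ≤ C) (P : Finset ℕ)
    (hP : ∀ q ∈ P, q.Prime) (N : ℕ) :
    ∑ m ∈ Icc 1 N, ‖∑ q ∈ P, if m * q ≤ N then a (m * q) else 0‖ ^ 2 ≤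
      C ^ 2 * N * recipSum P + offDiag a P N := by
  have h1 : ((∑ m ∈ Icc 1 N, ‖∑ q ∈ P, if m * q ≤ N then a (m * q) else 0‖ ^ 2 : ℝ) : ℂ) =
      ∑ q ∈ P, ∑ r ∈ P, corr a q r N := by
    push_cast
    simp_rw [← Complex.mul_conj', map_sum, Finset.sum_mul_sum]
    rw [Finset.sum_comm]
    refine Finset.sum_congr rfl fun q hq => ?_
    rw [Finset.sum_comm]
    exact Finset.sum_congr rfl fun r _ => sum_corr a q r N (hP q hq).pos
  have h0 : 0 ≤ ∑ m ∈ Icc 1 N, ‖∑ q ∈ P, if m * q ≤ N then a (m * q) else 0‖ ^ 2 := by positivity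
  rw [← Complex.norm_of_nonneg h0, h1]
  unfold recipSum offDiag
  rw [Finset.mul_sum, ← Finset.sum_add_distrib]
  refine (norm_sum_le _ _).trans (Finset.sum_le_sum fun q hq => ?_)
  rw [← Finset.add_sum_erase P _ hq, ← Finset.add_sum_erase P (fun r => ite _ _ _) hq, if_pos rfl,
    zero_add]
  refine (norm_add_le _ _).trans (add_le_add (norm_corr_self_le a C ha q N) ?_)
  refine (norm_sum_le _ _).trans (Finset.sum_le_sum fun r hr => ?_)
  rw [if_neg (Finset.ne_of_mem_erase hr).symm]

/-! ### The criterion for bounded sequences -/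

/-- The quantitative form of the criterion for a fixed finite set `P` of primes. -/
lemma key_bound (a : ℕ → ℂ) (C : ℝ) (ha : ∀ n, ‖a n‖ ≤ C) (P : Finset ℕ)
    (hP : ∀ q ∈ P, q.Prime) (N : ℕ) :
    (recipSum P * ‖∑ n ∈ Icc 1 N, (ArithmeticFunction.moebius n : ℂ) * a n‖) ^ 2 ≤
      3 * (C ^ 2 * N * (N * recipSum P + 2 * recipSum P * #P) +
        (C * N * ∑' n : ℕ, 1 / (n : ℝ) ^ 2) ^ 2 +
        N * (C ^ 2 * N * recipSum P + offDiag a P N)) := by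
  set S := recipSum P with hS
  set mu : ℕ → ℂ := fun n => (ArithmeticFunction.moebius n : ℂ) with hmu
  have hC : 0 ≤ C := (norm_nonneg _).trans (ha 0)
  set A := ∑ n ∈ Icc 1 N, (mu n * a n) * ((omegaP P n - S : ℝ) : ℂ) with hA
  set B := ∑ q ∈ P, ∑ m ∈ Icc 1 N, (if m * q ≤ N then (mu (m * q) + mu m) * a (m * q) else 0)
    with hB
  set D := ∑ m ∈ Icc 1 N, mu m * ∑ q ∈ P, (if m * q ≤ N then a (m * q) else 0) with hD
  have hAb : ‖A‖ ^ 2 ≤ C ^ 2 * N * (N * S + 2 * S * #P) := by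
    refine (norm_sum_sq_le N _ _ C fun n => ?_).trans ?_
    · rw [norm_mul]
      exact (mul_le_mul (norm_moebius_le n) (ha n) (norm_nonneg _) zero_le_one).trans_eq (one_mul C)
    · gcongr
      simp_rw [Complex.norm_real, Real.norm_eq_abs, sq_abs]
      exact turan_kubilius P hP N
  have hBb : ‖B‖ ^ 2 ≤ (C * N * ∑' n : ℕ, 1 / (n : ℝ) ^ 2) ^ 2 :=
    pow_le_pow_left₀ (norm_nonneg _) (moebius_error a C ha P hP N) 2
  have hDb : ‖D‖ ^ 2 ≤ N * (C ^ 2 * N * S + offDiag a P N) := by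
    refine (norm_sum_sq_le N _ _ 1 norm_moebius_le).trans ?_
    rw [one_pow, one_mul]
    gcongr
    exact bilinear_bound a C ha P hP N
  have hBD : ∑ n ∈ Icc 1 N, (mu n * a n) * (omegaP P n : ℂ) = B - D := by
    have e1 : ∑ n ∈ Icc 1 N, (mu n * a n) * (omegaP P n : ℂ) =
        ∑ q ∈ P, ∑ n ∈ Icc 1 N, if q ∣ n then mu n * a n else 0 := by
      rw [Finset.sum_comm]
      refine Finset.sum_congr rfl fun n _ => ?_
      unfold omegaP
      rw [Complex.ofReal_sum, Finset.mul_sum]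
      refine Finset.sum_congr rfl fun q _ => ?_
      split_ifs <;> simp
    have e2 : D = ∑ q ∈ P, ∑ m ∈ Icc 1 N, if m * q ≤ N then mu m * a (m * q) else 0 := by
      rw [hD, Finset.sum_comm]
      refine Finset.sum_congr rfl fun m _ => ?_
      simp only [Finset.mul_sum, mul_ite, mul_zero]
    rw [e1, e2, hB, ← Finset.sum_sub_distrib]
    refine Finset.sum_congr rfl fun q hq => ?_
    rw [sum_dvd_reindex N q (hP q hq).pos, ← Finset.sum_sub_distrib]
    refine Finset.sum_congr rfl fun m _ => ?_
    split_ifs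
    · ring
    · simp
  have hmain : (S : ℂ) * ∑ n ∈ Icc 1 N, mu n * a n = B - D - A := by
    rw [← hBD, hA, ← Finset.sum_sub_distrib, Finset.mul_sum]
    refine Finset.sum_congr rfl fun n _ => ?_
    push_cast; ring
  have hn : S * ‖∑ n ∈ Icc 1 N, mu n * a n‖ ≤ ‖A‖ + ‖B‖ + ‖D‖ := by
    have : S * ‖∑ n ∈ Icc 1 N, mu n * a n‖ = ‖B - D - A‖ := by
      rw [← hmain, norm_mul, Complex.norm_of_nonneg (recipSum_nonneg P)]
    rw [this]
    linarith [norm_sub_le (B - D) A, norm_sub_le B D]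
  have h0 : 0 ≤ S * ‖∑ n ∈ Icc 1 N, mu n * a n‖ := mul_nonneg (recipSum_nonneg P) (norm_nonneg _)
  have hsq := pow_le_pow_left₀ h0 hn 2
  nlinarith [sq_nonneg (‖A‖ - ‖B‖), sq_nonneg (‖A‖ - ‖D‖), sq_nonneg (‖B‖ - ‖D‖)]

lemma tendsto_corr (a : ℕ → ℂ) (q r : ℕ) (hq : 0 < q)
    (h : Tendsto (fun N : ℕ => (1 / (N : ℂ)) *
      ∑ n ∈ Icc 1 N, a (n * q) * (starRingEnd ℂ) (a (n * r))) atTop (nhds 0)) :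
    Tendsto (fun N : ℕ => ‖corr a q r N‖ / N) atTop (nhds 0) := by
  have hk : 0 < max q r := lt_of_lt_of_le hq (le_max_left q r)
  have h1 := (h.comp (Nat.tendsto_div_const_atTop hk.ne')).norm
  rw [norm_zero] at h1
  refine squeeze_zero (fun _ => by positivity) (fun N => ?_) h1
  simp only [Function.comp]
  rw [norm_mul]
  change _ ≤ _ * ‖corr a q r N‖
  rw [norm_div, norm_one, Complex.norm_natCast, div_eq_mul_one_div, mul_comm]
  rcases Nat.eq_zero_or_pos (N / max q r) with h0 | h0
  · simp [corr, h0]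
  · gcongr
    exact Nat.div_le_self _ _

lemma tendsto_offDiag (a : ℕ → ℂ) (P : Finset ℕ) (hP : ∀ q ∈ P, q.Prime)
    (h : ∀ q r : ℕ, q.Prime → r.Prime → q ≠ r → Tendsto (fun N : ℕ => (1 / (N : ℂ)) *
      ∑ n ∈ Icc 1 N, a (n * q) * (starRingEnd ℂ) (a (n * r))) atTop (nhds 0)) :
    Tendsto (fun N : ℕ => offDiag a P N / N) atTop (nhds 0) := by
  unfold offDiag
  simp_rw [Finset.sum_div]
  rw [show (0 : ℝ) = ∑ q ∈ P, ∑ r ∈ P, (0 : ℝ) by simp]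
  refine tendsto_finsetSum _ fun q hq => tendsto_finsetSum _ fun r hr => ?_
  by_cases hqr : q = r
  · simp [hqr]
  · simp only [if_neg hqr]
    exact tendsto_corr a q r (hP q hq).pos (h q r (hP q hq) (hP r hr) hqr)

lemma exists_primes_recipSum_ge (K : ℝ) :
    ∃ P : Finset ℕ, (∀ q ∈ P, q.Prime) ∧ K ≤ recipSum P := by
  by_contra! hcon
  refine Nat.Primes.not_summable_one_div
    (summable_of_sum_le (c := K) (fun _ => by positivity) fun u => ?_)
  have := hcon (u.map ⟨((↑) : Nat.Primes → ℕ), Nat.Primes.coe_nat_injective⟩) (by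
    intro q hq
    obtain ⟨r, _, rfl⟩ := Finset.mem_map.1 hq
    exact r.2)
  unfold recipSum at this
  exact ((Finset.sum_map u _ fun q : ℕ => 1 / (q : ℝ)).symm.trans_lt this).le

/-- The Kátai–Bourgain–Sarnak–Ziegler criterion for bounded sequences. -/
theorem criterion (a : ℕ → ℂ) (C : ℝ) (ha : ∀ n, ‖a n‖ ≤ C)
    (h : ∀ q r : ℕ, q.Prime → r.Prime → q ≠ r → Tendsto (fun N : ℕ => (1 / (N : ℂ)) *
      ∑ n ∈ Icc 1 N, a (n * q) * (starRingEnd ℂ) (a (n * r))) atTop (nhds 0)) :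
    Tendsto (fun N : ℕ => (1 / (N : ℂ)) *
      ∑ n ∈ Icc 1 N, (ArithmeticFunction.moebius n : ℂ) * a n) atTop (nhds 0) := by
  rw [Metric.tendsto_atTop']
  intro ε hε
  set Z := ∑' n : ℕ, 1 / (n : ℝ) ^ 2 with hZ
  -- The limiting bound for the squared average is at most `3 C² (2 + Z²) / S` once `S ≥ 1`.
  obtain ⟨P, hP, hS⟩ := exists_primes_recipSum_ge (max 1 (6 * (C ^ 2 * (2 + Z ^ 2)) / ε ^ 2))
  set S := recipSum P with hSdef
  have hS1 : 1 ≤ S := (le_max_left _ _).trans hS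
  have hS2 : 6 * (C ^ 2 * (2 + Z ^ 2)) ≤ S * ε ^ 2 :=
    (div_le_iff₀ (by positivity)).1 ((le_max_right _ _).trans hS)
  have hlim : Tendsto (fun N : ℕ => 3 * (C ^ 2 * (2 * S * #P) / N + offDiag a P N / N))
      atTop (nhds 0) := by
    have := ((tendsto_const_div_atTop_nhds_zero_nat (C ^ 2 * (2 * S * #P))).add
      (tendsto_offDiag a P hP h)).const_mul 3
    simpa using this
  have hev : ∀ᶠ N : ℕ in atTop, 3 * (C ^ 2 * (2 * S * #P) / N + offDiag a P N / N) < ε ^ 2 / 2 :=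
    hlim.eventually_lt_const (by positivity)
  obtain ⟨N₀, hN₀⟩ := Filter.eventually_atTop.1 hev
  refine ⟨N₀, fun N hN => ?_⟩
  have hsmall := hN₀ N hN.le
  have hNpos : (0 : ℝ) < N := by exact_mod_cast (Nat.zero_le _).trans_lt hN
  have hkey := key_bound a C ha P hP N
  rw [dist_zero_right, norm_mul, norm_div, norm_one, Complex.norm_natCast, one_div_mul_eq_div]
  set M := ‖∑ n ∈ Icc 1 N, (ArithmeticFunction.moebius n : ℂ) * a n‖ with hM
  rw [← hZ, ← hSdef] at hkey
  have e : 3 * (C ^ 2 * (2 * S * #P) / N + offDiag a P N / N) =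
      3 * (C ^ 2 * (2 * S * #P) + offDiag a P N) / N := by ring
  rw [e, div_lt_iff₀ hNpos] at hsmall
  have hC2 : C ^ 2 * Z ^ 2 ≤ C ^ 2 * Z ^ 2 * S := le_mul_of_one_le_right (by positivity) hS1
  have hS3 : S ≤ S ^ 2 := by nlinarith
  rw [div_lt_iff₀ hNpos]
  refine lt_of_pow_lt_pow_left₀ 2 (by positivity) ?_
  have hSpos : 0 < S := by linarith
  have hfin : (S * M) ^ 2 < S ^ 2 * (ε * N) ^ 2 := by
    refine hkey.trans_lt ?_
    have t1 : 3 * (C ^ 2 * (2 * S * #P) + offDiag a P N) * N < ε ^ 2 / 2 * N * N :=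
      mul_lt_mul_of_pos_right hsmall hNpos
    have t2 : ε ^ 2 / 2 * N * N ≤ S ^ 2 * (ε ^ 2 / 2 * N * N) :=
      le_mul_of_one_le_left (by positivity) (by nlinarith)
    have t3 : 6 * (C ^ 2 * (2 + Z ^ 2)) * (S * N ^ 2) ≤ S * ε ^ 2 * (S * N ^ 2) :=
      mul_le_mul_of_nonneg_right hS2 (by positivity)
    have t4 := mul_le_mul_of_nonneg_right hC2 (sq_nonneg (N : ℝ))
    nlinarith
  rw [mul_pow] at hfin
  exact lt_of_mul_lt_mul_left hfin (by positivity)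

end KBSZ

/-- **Kátai–Bourgain–Sarnak–Ziegler criterion for the polynomial Sarnak property**:
let `X` be a compact topological space, `T : X → X` continuous, `f : X → ℂ`
continuous, `x ∈ X`, and `p` an integer polynomial with `p(n) ≥ 0` for all `n`.
If for all distinct primes `q₁, q₂` the averages
`(1/N) ∑_{n=1}^{N} f(T^{p(n q₁)} x) conj(f(T^{p(n q₂)} x))` converge to `0`,
then `(1/N) ∑_{n=1}^{N} μ(n) f(T^{p(n)} x)` converges to `0`. -/
theorem kbsz_criterion_polynomial_sarnak
    {X : Type*} [TopologicalSpace X] [CompactSpace X]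
    (T : X → X) (hT : Continuous T)
    (f : X → ℂ) (hf : Continuous f) (x : X)
    (p : Polynomial ℤ) (hp : ∀ n : ℕ, 0 ≤ p.eval (n : ℤ))
    (horth : ∀ q₁ q₂ : ℕ, q₁.Prime → q₂.Prime → q₁ ≠ q₂ →
      Tendsto
        (fun N : ℕ => (1 / (N : ℂ)) *
          ∑ n ∈ Finset.Icc 1 N,
            f (T^[(p.eval ((n * q₁ : ℕ) : ℤ)).toNat] x) *
              (starRingEnd ℂ) (f (T^[(p.eval ((n * q₂ : ℕ) : ℤ)).toNat] x)))
        atTop (nhds 0)) :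
    Tendsto
      (fun N : ℕ => (1 / (N : ℂ)) *
        ∑ n ∈ Finset.Icc 1 N,
          (ArithmeticFunction.moebius n : ℂ) * f (T^[(p.eval (n : ℤ)).toNat] x))
      atTop (nhds 0) := by
  obtain ⟨C, hC⟩ := isCompact_univ.exists_bound_of_continuousOn hf.continuousOn
  exact KBSZ.criterion (fun n => f (T^[(p.eval (n : ℤ)).toNat] x)) C
    (fun n => hC _ (Set.mem_univ _)) horth
end

section
/- Let (a_n)_{n≥1} be a periodic sequence of complex numbers, i.e., there exists q ≥ 1 with a_{n+q} = a_n for all n. Then the averages (1/N) ∑_{n=1}^{N} μ(n) · a_n converge to 0 as N → ∞. (Sarnak's conjecture for periodic sequences, a consequence of the prime number theorem in arithmetic progressions.) -/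
/-!
A periodic sequence is a finite linear combination of indicators of residue classes. Removing the
common divisor of a class with the modulus and expanding in Dirichlet characters
(`tendsto_mean_moebius_modEq`, `tendsto_mean_moebius_coprime_modEq`) reduces the claim to the fact
that `χ(n) μ(n)` has mean value `0` for every Dirichlet character `χ`
(`tendsto_mean_char_mul_moebius`).

The Dirichlet series of `χ μ` is `1 / L(s, χ)`. Since `L(s, χ)` has no zero on `re s ≥ 1` (and, for
trivial `χ`, a simple pole at `s = 1`), this series extends continuously to `re s ≥ 1`. The passage
from there to the mean value is a Tauberian theorem of Wiener–Ikehara type for bounded coefficients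
(`tendsto_mean_zero_of_LSeries_continuousOn`): the function `g(u) = e^{-u} ∑_{n ≤ e^u} f(n)` is
bounded and slowly varying, and its Laplace transform is continuous up to the boundary. Convolved
with a kernel whose Fourier transform is smooth of compact support, `g` tends to `0` by the
Riemann–Lebesgue lemma, and slow variation allows the kernel to be concentrated and removed.
-/

open Filter Finset
open MeasureTheory Topology FourierTransform SchwartzMap

/-! ### A Tauberian theorem for Laplace transforms -/

lemma integral_fourier_mul_eq_flip {f G : ℝ → ℂ} (hf : Integrable f) (hG : Integrable G) :
    ∫ ξ, 𝓕 f ξ * G ξ = ∫ x, f x * 𝓕 G x := by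
  simpa using! VectorFourier.integral_bilin_fourierIntegral_eq_flip (.mul ℂ ℂ) (L := innerₗ ℝ)
    Real.continuous_fourierChar continuous_inner hf hG

/-- The Fourier-analytic core. Write `k = 𝓕 φ`. For `δ > 0`, Parseval gives
`∫ k(u - v) g(u) e^{-δu} du = ∫ e^{2πivt} φ(t) K(δ + 2πit) dt`. As `φ` has compact support and
`K` is continuous up to the imaginary axis, `δ → 0` is allowed on both sides, and the limit on the
right tends to `0` as `v → ∞` by the Riemann–Lebesgue lemma. -/
lemma integral_fourier_shift_mul_tendsto_zero (φ : 𝓢(ℝ, ℂ)) (hφ : HasCompactSupport φ)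
    {g : ℝ → ℂ} (hgm : Measurable g) (hgb : ∀ u, ‖g u‖ ≤ 1) (hg0 : ∀ u < 0, g u = 0)
    {K : ℂ → ℂ} (hK : ContinuousOn K {z | 0 ≤ z.re})
    (hgK : ∀ z : ℂ, 0 < z.re → ∫ u : ℝ, g u * Complex.exp (-z * u) = K z) :
    Tendsto (fun v : ℝ => ∫ u, 𝓕 (φ : ℝ → ℂ) (u - v) * g u) atTop (𝓝 0) := by
  set k : 𝓢(ℝ, ℂ) := 𝓕 φ with hk
  have hkφ : ∀ u, 𝓕 (φ : ℝ → ℂ) u = k u := fun u => by rw [hk, SchwartzMap.fourier_coe]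
  have hline : ∀ δ t : ℝ, ((δ : ℂ) + 2 * Real.pi * t * Complex.I).re = δ := by
    intro δ t; simp
  have hbd : ∀ δ : ℝ, 0 ≤ δ → ∀ u, ‖g u * Complex.exp (-(δ : ℂ) * u)‖ ≤ 1 := by
    intro δ hδ u
    rcases lt_or_ge u 0 with hu | hu
    · simp [hg0 u hu]
    · rw [norm_mul, Complex.norm_exp]
      have : Real.exp (-(δ : ℂ) * u).re ≤ 1 := by
        rw [Real.exp_le_one_iff]; simp; positivity
      calc _ ≤ 1 * 1 := mul_le_mul (hgb u) this (Real.exp_pos _).le zero_le_one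
        _ = 1 := one_mul 1
  have hGm : ∀ δ : ℝ, Measurable fun u : ℝ => g u * Complex.exp (-(δ : ℂ) * u) := by
    intro δ; fun_prop
  have hGint : ∀ δ : ℝ, 0 < δ → Integrable fun u : ℝ => g u * Complex.exp (-(δ : ℂ) * u) := by
    intro δ hδ
    have h1 : IntegrableOn (fun u : ℝ => Real.exp (-δ * u)) (Set.Ici 0) :=
      (integrableOn_Ici_iff_integrableOn_Ioi (by simp)).2
        (integrableOn_exp_mul_Ioi (neg_lt_zero.2 hδ) 0)
    refine Integrable.mono' (h1.integrable_indicator measurableSet_Ici)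
      (hGm δ).aestronglyMeasurable (Eventually.of_forall fun u => ?_)
    rcases lt_or_ge u 0 with hu | hu
    · simp [hg0 u hu, Set.indicator, not_le.2 hu]
    · rw [Set.indicator_of_mem (Set.mem_Ici.2 hu), norm_mul, Complex.norm_exp]
      have : (-(δ : ℂ) * u).re = -δ * u := by simp
      rw [this]
      exact mul_le_of_le_one_left (Real.exp_pos _).le (hgb u)
  -- Parseval on the line `re z = δ`; modulating `φ` by `e^{2πivt}` shifts `𝓕 φ` by `v`
  have hpars : ∀ δ : ℝ, 0 < δ → ∀ v : ℝ,
      ∫ u, k (u - v) * (g u * Complex.exp (-(δ : ℂ) * u)) =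
      ∫ t : ℝ, (Complex.exp (2 * Real.pi * v * t * Complex.I) * φ t) *
        K (δ + 2 * Real.pi * t * Complex.I) := by
    intro δ hδ v
    have hfi : Integrable fun t : ℝ => Complex.exp (2 * Real.pi * v * t * Complex.I) * φ t := by
      refine φ.integrable.norm.mono' (by fun_prop) (Eventually.of_forall fun t => ?_)
      rw [norm_mul, Complex.norm_exp]; simp
    have := integral_fourier_mul_eq_flip hfi (hGint δ hδ)
    convert this using 1
    · refine integral_congr_ae (Eventually.of_forall fun u => ?_)
      simp only
      rw [← hkφ, Real.fourier_real_eq_integral_exp_smul, Real.fourier_real_eq_integral_exp_smul]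
      congr 1
      refine integral_congr_ae (Eventually.of_forall fun t => ?_)
      simp only [smul_eq_mul]
      rw [← mul_assoc, ← Complex.exp_add]
      congr 2
      push_cast; ring
    · refine integral_congr_ae (Eventually.of_forall fun t => ?_)
      simp only
      rw [Real.fourier_real_eq_integral_exp_smul, ← hgK _ (by rw [hline]; exact hδ)]
      congr 1
      refine integral_congr_ae (Eventually.of_forall fun u => ?_)
      simp only [smul_eq_mul]
      rw [mul_left_comm, ← Complex.exp_add]
      congr 2
      push_cast; ring
  -- the same identity on the boundary line
  have hbdry : ∀ v : ℝ, ∫ u, k (u - v) * g u =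
      ∫ t : ℝ, (Complex.exp (2 * Real.pi * v * t * Complex.I) * φ t) *
        K (2 * Real.pi * t * Complex.I) := by
    intro v
    have hL : Tendsto (fun δ : ℝ => ∫ u, k (u - v) * (g u * Complex.exp (-(δ : ℂ) * u)))
        (𝓝[>] 0) (𝓝 (∫ u, k (u - v) * g u)) := by
      refine tendsto_integral_filter_of_dominated_convergence (fun u => ‖k (u - v)‖)
        (Eventually.of_forall fun δ => ?_) ?_ ?_ (Eventually.of_forall fun u => ?_)
      · exact (by fun_prop : Measurable fun u => k (u - v)).mul (hGm δ) |>.aestronglyMeasurable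
      · filter_upwards [self_mem_nhdsWithin] with δ hδ
        refine Eventually.of_forall fun u => ?_
        rw [norm_mul]
        exact mul_le_of_le_one_right (norm_nonneg _) (hbd δ (le_of_lt hδ) u)
      · exact (k.integrable.comp_sub_right v).norm
      · refine tendsto_nhdsWithin_of_tendsto_nhds ?_
        have : Continuous fun δ : ℝ => k (u - v) * (g u * Complex.exp (-(δ : ℂ) * u)) := by
          fun_prop
        simpa using this.tendsto 0
    have hcpt : IsCompact ((fun p : ℝ × ℝ => (p.1 : ℂ) + 2 * Real.pi * p.2 * Complex.I) ''
        (Set.Icc 0 1 ×ˢ tsupport φ)) :=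
      (isCompact_Icc.prod hφ).image (by fun_prop)
    obtain ⟨B, hB⟩ := hcpt.exists_bound_of_continuousOn (hK.mono (by
      rintro _ ⟨p, hp, rfl⟩
      rw [Set.mem_ofPred_eq, hline]; exact hp.1.1))
    have hR : Tendsto (fun δ : ℝ => ∫ t : ℝ,
        (Complex.exp (2 * Real.pi * v * t * Complex.I) * φ t) *
          K (δ + 2 * Real.pi * t * Complex.I)) (𝓝[>] 0)
        (𝓝 (∫ t : ℝ, (Complex.exp (2 * Real.pi * v * t * Complex.I) * φ t) *
          K (2 * Real.pi * t * Complex.I))) := by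
      refine tendsto_integral_filter_of_dominated_convergence (fun t => ‖φ t‖ * B)
        ?_ ?_ (φ.integrable.norm.mul_const B) (Eventually.of_forall fun t => ?_)
      · filter_upwards [self_mem_nhdsWithin] with δ hδ
        have hc : Continuous fun t : ℝ => K (δ + 2 * Real.pi * t * Complex.I) :=
          hK.comp_continuous (by fun_prop) fun t => by
            rw [Set.mem_ofPred_eq, hline]; exact le_of_lt hδ
        exact ((Continuous.mul (by fun_prop) φ.continuous).mul hc).aestronglyMeasurable
      · filter_upwards [Ioc_mem_nhdsGT (zero_lt_one' ℝ)] with δ hδ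
        refine Eventually.of_forall fun t => ?_
        rw [norm_mul, norm_mul, Complex.norm_exp]
        have h1 : (2 * Real.pi * v * t * Complex.I).re = 0 := by simp
        rw [h1, Real.exp_zero, one_mul]
        by_cases ht : φ t = 0
        · simp [ht]
        · exact mul_le_mul_of_nonneg_left
            (hB _ ⟨(δ, t), ⟨⟨hδ.1.le, hδ.2⟩, subset_tsupport _ ht⟩, rfl⟩) (norm_nonneg _)
      · refine Tendsto.const_mul _ ?_
        have h0 : ContinuousWithinAt K {z | 0 ≤ z.re} (2 * Real.pi * t * Complex.I) :=
          hK _ (by simp)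
        refine h0.tendsto.comp (tendsto_nhdsWithin_iff.2 ⟨?_, ?_⟩)
        · refine tendsto_nhdsWithin_of_tendsto_nhds ?_
          have : Continuous fun δ : ℝ => (δ : ℂ) + 2 * Real.pi * t * Complex.I := by fun_prop
          simpa using this.tendsto 0
        · filter_upwards [self_mem_nhdsWithin] with δ hδ
          rw [hline]; exact le_of_lt hδ
    refine tendsto_nhds_unique hL (hR.congr' ?_)
    filter_upwards [self_mem_nhdsWithin] with δ hδ
    exact (hpars δ hδ v).symm
  have hRL := ((Real.zero_at_infty_fourier
    (fun t : ℝ => φ t * K (2 * Real.pi * t * Complex.I))).mono_left atBot_le_cocompact).comp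
      tendsto_neg_atTop_atBot
  refine hRL.congr fun v => ?_
  simp only [hkφ]
  rw [hbdry v, Function.comp_apply, Real.fourier_real_eq_integral_exp_smul]
  refine integral_congr_ae (Eventually.of_forall fun t => ?_)
  simp only [smul_eq_mul]
  rw [mul_assoc (Complex.exp _) (φ t)]
  congr 2
  push_cast; ring

/-- Tauberian theorem: a bounded, slowly varying function on `[0, ∞)` whose Laplace transform
extends continuously to `re z ≥ 0` tends to `0`. Smoothing `g` at scale `1 / R` with a kernel of
integral `1` gives a function tending to `0`, and changes `g` by at most `O(1 / R)` asymptotically,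
by slow variation. -/
lemma tendsto_zero_of_slowly_varying
    {g : ℝ → ℂ} (hgm : Measurable g) (hgb : ∀ u, ‖g u‖ ≤ 1) (hg0 : ∀ u < 0, g u = 0)
    {K : ℂ → ℂ} (hK : ContinuousOn K {z | 0 ≤ z.re})
    (hgK : ∀ z : ℂ, 0 < z.re → ∫ u : ℝ, g u * Complex.exp (-z * u) = K z)
    (hslow : ∀ v h : ℝ, ‖g v - g (v + h)‖ ≤ 2 * |h| + Real.exp (1 - v)) :
    Tendsto g atTop (𝓝 0) := by
  obtain ⟨φ, hφ, hφ0⟩ : ∃ φ : 𝓢(ℝ, ℂ), HasCompactSupport φ ∧ φ 0 = 1 := by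
    let b : ContDiffBump (0 : ℝ) := ⟨1, 2, one_pos, one_lt_two⟩
    have h1 : HasCompactSupport fun x => (b x : ℂ) :=
      b.hasCompactSupport.comp_left (g := fun x : ℝ => (x : ℂ)) (by simp)
    have h2 : ContDiff ℝ ((⊤ : ℕ∞) : WithTop ℕ∞) fun x => (b x : ℂ) :=
      Complex.ofRealCLM.contDiff.comp b.contDiff
    refine ⟨h1.toSchwartzMap h2, h1, ?_⟩
    simp
    exact b.one_of_mem_closedBall (by simp [b])
  set k : 𝓢(ℝ, ℂ) := 𝓕 φ with hk
  have hkφ : ∀ u, 𝓕 (φ : ℝ → ℂ) u = k u := fun u => by rw [hk, SchwartzMap.fourier_coe]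
  -- Fourier inversion at `0`
  have hk1 : ∫ y, k y = 1 := by
    have h := congrArg (fun ψ : 𝓢(ℝ, ℂ) => ψ 0) 
      (FourierTransform.fourierInv_fourier_eq (F := 𝓢(ℝ, ℂ)) φ)
    simp only [SchwartzMap.fourierInv_coe, hφ0] at h
    rw [Real.fourierInv_eq'] at h
    simpa using h
  set A := ∫ y, ‖y‖ ^ 1 * ‖k y‖ with hA
  set B := ∫ y, ‖k y‖ with hB
  have hAi : Integrable fun y => ‖y‖ ^ 1 * ‖k y‖ := k.integrable_pow_mul volume 1
  have hBi : Integrable fun y => ‖k y‖ := k.integrable.norm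
  have hA0 : 0 ≤ A := integral_nonneg fun y => by positivity
  -- the smoothed function at scale `1 / R`
  have hsmooth : ∀ R : ℝ, 0 < R →
      Tendsto (fun v : ℝ => ∫ y, k y * g (v + R⁻¹ * y)) atTop (𝓝 0) := by
    intro R hR
    have hR' : (0 : ℝ) < R⁻¹ := inv_pos.2 hR
    -- `u ↦ g(u / R)` has Laplace transform `z ↦ R K(R z)`, so the kernel itself stays fixed
    have h := integral_fourier_shift_mul_tendsto_zero φ hφ (g := fun u => g (R⁻¹ * u))
      (K := fun z => R * K (R * z)) (by fun_prop) (fun u => hgb _)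
      (fun u hu => hg0 _ (mul_neg_of_pos_of_neg hR' hu))
      (continuousOn_const.mul (hK.comp (by fun_prop) fun z hz => by
        simp only [Set.mem_ofPred_eq] at hz ⊢
        simp; positivity)) (fun z hz => by
          have := Measure.integral_comp_mul_left
            (fun u : ℝ => g u * Complex.exp (-(R * z) * u)) R⁻¹
          rw [hgK (R * z) (by simp; positivity)] at this
          rw [inv_inv, abs_of_pos hR, Complex.real_smul] at this
          rw [← this]
          refine integral_congr_ae (Eventually.of_forall fun u => ?_)
          simp only
          congr 2
          push_cast
          have : (R : ℂ) ≠ 0 := by exact_mod_cast hR.ne'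
          field_simp)
    have h2 := h.comp (tendsto_id.const_mul_atTop hR)
    refine h2.congr fun v => ?_
    simp only [Function.comp_apply, id, hkφ]
    rw [← integral_add_right_eq_self _ (R * v)]
    refine integral_congr_ae (Eventually.of_forall fun y => ?_)
    simp only
    congr 2
    · ring
    · field_simp
      ring
  have hdiff : ∀ R : ℝ, 0 < R → ∀ v : ℝ,
      ‖g v - ∫ y, k y * g (v + R⁻¹ * y)‖ ≤ 2 * R⁻¹ * A + Real.exp (1 - v) * B := by
    intro R hR v
    have hR' : (0 : ℝ) < R⁻¹ := inv_pos.2 hR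
    have hi1 : Integrable fun y => k y * g v := k.integrable.mul_const _
    have hi2 : Integrable fun y => k y * g (v + R⁻¹ * y) := by
      refine hBi.mono' ?_ (Eventually.of_forall fun y => ?_)
      · exact (by fun_prop : Measurable fun y => k y * g (v + R⁻¹ * y)).aestronglyMeasurable
      · rw [norm_mul]; exact mul_le_of_le_one_right (norm_nonneg _) (hgb _)
    have h1 : g v = ∫ y, k y * g v := by rw [integral_mul_const, hk1, one_mul]
    have h2 : 2 * R⁻¹ * A + Real.exp (1 - v) * B =
        ∫ y, (2 * R⁻¹ * (‖y‖ ^ 1 * ‖k y‖) + Real.exp (1 - v) * ‖k y‖) := by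
      rw [integral_add (hAi.const_mul _) (hBi.const_mul _), integral_const_mul,
        integral_const_mul]
    rw [h2]
    conv_lhs => rw [h1]
    rw [← integral_sub hi1 hi2]
    refine norm_integral_le_of_norm_le ((hAi.const_mul _).add (hBi.const_mul _))
      (Eventually.of_forall fun y => ?_)
    rw [← mul_sub, norm_mul]
    have h3 := hslow v (R⁻¹ * y)
    rw [abs_mul, abs_of_pos hR'] at h3
    calc ‖k y‖ * ‖g v - g (v + R⁻¹ * y)‖ ≤ ‖k y‖ * (2 * (R⁻¹ * |y|) + Real.exp (1 - v)) :=
          mul_le_mul_of_nonneg_left h3 (norm_nonneg _)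
      _ = _ := by rw [pow_one, Real.norm_eq_abs]; ring
  rw [Metric.tendsto_nhds]
  intro ε hε
  obtain ⟨R, hR, hRA⟩ : ∃ R : ℝ, 0 < R ∧ 2 * R⁻¹ * A < ε / 3 := by
    refine ⟨6 * (A + 1) / ε, by positivity, ?_⟩
    rw [inv_div]
    have : 2 * (ε / (6 * (A + 1))) * A = ε / 3 * (A / (A + 1)) := by field_simp; ring
    rw [this]
    exact mul_lt_of_lt_one_right (by positivity) ((div_lt_one (by positivity)).2 (by linarith))
  have hexp : Tendsto (fun v : ℝ => Real.exp (1 - v) * B) atTop (𝓝 0) := by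
    have : Tendsto (fun v : ℝ => Real.exp (1 - v)) atTop (𝓝 0) :=
      Real.tendsto_exp_atBot.comp (tendsto_atBot_add_const_left _ 1 tendsto_neg_atTop_atBot)
    simpa using this.mul_const B
  filter_upwards [hexp.eventually_lt_const (by positivity : 0 < ε / 3),
    Metric.tendsto_nhds.1 (hsmooth R hR) (ε / 3) (by positivity)] with v h1 h2
  rw [dist_zero_right] at h2 ⊢
  calc ‖g v‖ = ‖(g v - ∫ y, k y * g (v + R⁻¹ * y)) + ∫ y, k y * g (v + R⁻¹ * y)‖ := by
        rw [sub_add_cancel]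
    _ ≤ _ := norm_add_le _ _
    _ < ε := by linarith [hdiff R hR v]

/-! ### Mean values from Dirichlet series -/

/-- If `f` is bounded by `1` and its Dirichlet series extends continuously to `re s ≥ 1`, then `f`
has mean value `0`. The function `g(u) = e^{-u} ∑_{n ≤ e^u} f(n)` is slowly varying, and by partial
summation its Laplace transform is `F(1 + z) / (1 + z)`. -/
lemma tendsto_mean_zero_of_LSeries_continuousOn {f : ℕ → ℂ} (hf : ∀ n, ‖f n‖ ≤ 1)
    {F : ℂ → ℂ} (hF : ContinuousOn F {s | 1 ≤ s.re})
    (hfF : ∀ s : ℂ, 1 < s.re → LSeries f s = F s) :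
    Tendsto (fun N : ℕ => (1 / (N : ℂ)) * ∑ n ∈ Icc 1 N, f n) atTop (𝓝 0) := by
  set S : ℝ → ℂ := fun x => ∑ n ∈ Icc 1 ⌊x⌋₊, f n with hS
  set g : ℝ → ℂ := fun u => S (Real.exp u) * Real.exp (-u) with hg
  have hSx : ∀ x : ℝ, 0 ≤ x → ‖S x‖ ≤ x := by
    intro x hx
    calc ‖S x‖ ≤ ∑ n ∈ Icc 1 ⌊x⌋₊, (1 : ℝ) := norm_sum_le_of_le _ fun n _ => hf n
      _ = ⌊x⌋₊ := by simp
      _ ≤ x := Nat.floor_le hx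
  have hSxy : ∀ x y : ℝ, 0 ≤ x → x ≤ y → ‖S y - S x‖ ≤ y - x + 1 := by
    intro x y hx hxy
    have hfl : ⌊x⌋₊ ≤ ⌊y⌋₊ := Nat.floor_le_floor hxy
    have h1 : S y - S x = ∑ n ∈ Ioc ⌊x⌋₊ ⌊y⌋₊, f n := by
      have h2 : ∀ m : ℕ, Icc 1 m = Ioc 0 m := fun m => by ext; simp [Nat.succ_le_iff]
      simp only [hS, h2]
      rw [← Finset.sum_Ioc_consecutive f (Nat.zero_le _) hfl, add_sub_cancel_left]
    rw [h1]
    calc ‖∑ n ∈ Ioc ⌊x⌋₊ ⌊y⌋₊, f n‖ ≤ ∑ n ∈ Ioc ⌊x⌋₊ ⌊y⌋₊, (1 : ℝ) :=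
          norm_sum_le_of_le _ fun n _ => hf n
      _ = (⌊y⌋₊ : ℝ) - ⌊x⌋₊ := by simp [Nat.cast_sub hfl]
      _ ≤ y - x + 1 := by
          linarith [Nat.floor_le (hx.trans hxy), (Nat.lt_floor_add_one x)]
  have hSm : Measurable S :=
    (measurable_from_top (f := fun m : ℕ => ∑ n ∈ Icc 1 m, f n)).comp Nat.measurable_floor
  have hS0 : ∀ x < 1, S x = 0 := fun x hx => by simp [hS, Nat.floor_eq_zero.2 hx]
  have hgm : Measurable g := by
    have : Measurable fun u => S (Real.exp u) := hSm.comp Real.measurable_exp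
    fun_prop
  have hgnorm : ∀ u, ‖g u‖ = ‖S (Real.exp u)‖ * Real.exp (-u) := fun u => by
    rw [hg, norm_mul, Complex.norm_real, Real.norm_eq_abs, abs_of_pos (Real.exp_pos _)]
  have hgb : ∀ u, ‖g u‖ ≤ 1 := by
    intro u
    rw [hgnorm]
    calc _ ≤ Real.exp u * Real.exp (-u) :=
          mul_le_mul_of_nonneg_right (hSx _ (Real.exp_pos _).le) (Real.exp_pos _).le
      _ = 1 := by rw [← Real.exp_add]; simp
  have hone : ∀ v h : ℝ, 0 ≤ h → ‖g v - g (v + h)‖ ≤ 2 * h + Real.exp (-v) := by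
    intro v h hh
    have hev := Real.exp_pos v
    have hle : Real.exp v ≤ Real.exp (v + h) := Real.exp_le_exp.2 (by linarith)
    have hmle : Real.exp (-(v + h)) ≤ Real.exp (-v) := Real.exp_le_exp.2 (by linarith)
    have e1 : g v - g (v + h) = S (Real.exp v) * ((Real.exp (-v) - Real.exp (-(v + h)) : ℝ) : ℂ)
        - (S (Real.exp (v + h)) - S (Real.exp v)) * (Real.exp (-(v + h)) : ℝ) := by
      simp only [hg]; push_cast; ring
    have e2 : Real.exp v * Real.exp (-v) = 1 := by rw [← Real.exp_add]; simp
    have e3 : Real.exp v * Real.exp (-(v + h)) = Real.exp (-h) := by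
      rw [← Real.exp_add]; congr 1; ring
    have e4 : Real.exp (v + h) * Real.exp (-(v + h)) = 1 := by rw [← Real.exp_add]; simp
    have e5 : 1 - h ≤ Real.exp (-h) := by linarith [Real.add_one_le_exp (-h)]
    calc ‖g v - g (v + h)‖ ≤ ‖S (Real.exp v)‖ * (Real.exp (-v) - Real.exp (-(v + h)))
          + ‖S (Real.exp (v + h)) - S (Real.exp v)‖ * Real.exp (-(v + h)) := by
          rw [e1]
          refine (norm_sub_le _ _).trans (le_of_eq ?_)
          rw [norm_mul, norm_mul, Complex.norm_real, Complex.norm_real, Real.norm_eq_abs,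
            Real.norm_eq_abs, abs_of_pos (Real.exp_pos _), abs_of_nonneg (by linarith)]
      _ ≤ Real.exp v * (Real.exp (-v) - Real.exp (-(v + h)))
          + (Real.exp (v + h) - Real.exp v + 1) * Real.exp (-(v + h)) := by
          gcongr
          · exact hSx _ hev.le
          · exact hSxy _ _ hev.le hle
      _ = 2 * (1 - Real.exp (-h)) + Real.exp (-(v + h)) := by
          rw [mul_sub, e2, e3, add_mul, sub_mul, e3, e4]; ring
      _ ≤ 2 * h + Real.exp (-v) := by linarith
  have hslow : ∀ v h : ℝ, ‖g v - g (v + h)‖ ≤ 2 * |h| + Real.exp (1 - v) := by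
    intro v h
    -- for `|h| > 1` the bound `2 ≤ 2|h|` is enough; for `-1 ≤ h < 0` swap the two points
    rcases le_or_gt |h| 1 with h1 | h1
    · rcases le_total 0 h with h0 | h0
      · rw [abs_of_nonneg h0]
        exact (hone v h h0).trans (by gcongr; linarith)
      · have := hone (v + h) (-h) (by linarith)
        rw [add_neg_cancel_right, norm_sub_rev] at this
        rw [abs_of_nonpos h0] at h1 ⊢
        exact this.trans (by gcongr; linarith)
    · have := (norm_sub_le (g v) (g (v + h))).trans (add_le_add (hgb _) (hgb _))
      have := Real.exp_pos (1 - v)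
      linarith
  have hlap : ∀ z : ℂ, 0 < z.re →
      ∫ u : ℝ, g u * Complex.exp (-z * u) = F (1 + z) / (1 + z) := by
    intro z hz
    have hz1 : (1 : ℝ) < (1 + z).re := by simpa using hz
    have hne : (1 + z) ≠ 0 := fun h => by rw [h] at hz1; norm_num at hz1
    have hO : (fun n : ℕ => ∑ k ∈ Icc 1 n, ‖f k‖) =O[atTop] fun n => (n : ℝ) ^ (1 : ℝ) := by
      refine Asymptotics.isBigO_of_le _ fun n => ?_
      rw [Real.rpow_one, Real.norm_of_nonneg (by positivity), Real.norm_of_nonneg (by positivity)]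
      calc ∑ k ∈ Icc 1 n, ‖f k‖ ≤ ∑ k ∈ Icc 1 n, (1 : ℝ) := sum_le_sum fun k _ => hf k
        _ = n := by simp
    have h1 := LSeries_eq_mul_integral' f zero_le_one hz1 hO
    rw [← hfF _ hz1, h1, mul_div_cancel_left₀ _ hne]
    have h2 : ∫ t in Set.Ioi (1 : ℝ), (∑ k ∈ Icc 1 ⌊t⌋₊, f k) * (t : ℂ) ^ (-(1 + z + 1)) =
        ∫ t in Set.Ioi (0 : ℝ), S t * (t : ℂ) ^ (-(1 + z + 1)) := by
      rw [← integral_Ici_eq_integral_Ioi]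
      refine (setIntegral_eq_of_subset_of_forall_sdiff_eq_zero measurableSet_Ioi
        (fun x hx => lt_of_lt_of_le one_pos (Set.mem_Ici.1 hx)) fun x hx => ?_).symm
      change S x * _ = 0
      rw [hS0 x (not_le.1 hx.2), zero_mul]
    rw [h2]
    -- substitute `t = e^u`
    have h3 := integral_image_eq_integral_abs_deriv_smul MeasurableSet.univ
      (fun x _ => (Real.hasDerivAt_exp x).hasDerivWithinAt) Real.exp_injective.injOn
      (fun t : ℝ => S t * (t : ℂ) ^ (-(1 + z + 1)))
    rw [Set.image_univ, Real.range_exp] at h3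
    rw [h3, setIntegral_univ]
    refine integral_congr_ae (Eventually.of_forall fun u => ?_)
    simp only [hg]
    rw [abs_of_pos (Real.exp_pos _), Complex.real_smul, Complex.cpow_def_of_ne_zero
      (by exact_mod_cast (Real.exp_pos u).ne'), ← Complex.ofReal_log (Real.exp_pos _).le,
      Real.log_exp, mul_left_comm, mul_assoc, Complex.ofReal_exp, Complex.ofReal_exp,
      ← Complex.exp_add, ← Complex.exp_add]
    congr 2
    push_cast; ring
  have hK : ContinuousOn (fun z : ℂ => F (1 + z) / (1 + z)) {z | 0 ≤ z.re} := by
    refine (hF.comp (by fun_prop) fun z hz => ?_).div (by fun_prop) fun z hz h => ?_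
    · simpa using hz
    · have hz' : 0 ≤ z.re := hz
      have : (1 + z).re = 0 := by rw [h]; simp
      simp at this
      linarith
  have hlim := tendsto_zero_of_slowly_varying hgm hgb
    (fun u hu => by rw [hg]; simp only; rw [hS0 _ (Real.exp_lt_one_iff.2 hu), zero_mul]) hK hlap hslow
  have hcomp := hlim.comp (Real.tendsto_log_atTop.comp tendsto_natCast_atTop_atTop)
  refine hcomp.congr' ?_
  filter_upwards [eventually_gt_atTop 0] with N hN
  have hN' : (0 : ℝ) < N := by exact_mod_cast hN
  simp only [Function.comp_apply, hg, hS]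
  rw [Real.exp_neg, Real.exp_log hN', Nat.floor_natCast, mul_comm]
  simp

open ArithmeticFunction in
/-- The Dirichlet series of `χ μ` is `1 / L(s, χ)`, which is continuous on `re s ≥ 1` because
`L(s, χ)` does not vanish there. -/
lemma tendsto_mean_char_mul_moebius {N : ℕ} [NeZero N] (χ : DirichletCharacter ℂ N) :
    Tendsto (fun M : ℕ => (1 / (M : ℂ)) *
      ∑ n ∈ Icc 1 M, χ (n : ZMod N) * (moebius n : ℂ)) atTop (𝓝 0) := by
  have hf : ∀ n : ℕ, ‖χ (n : ZMod N) * (moebius n : ℂ)‖ ≤ 1 := by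
    intro n
    rw [norm_mul]
    refine mul_le_one₀ (χ.norm_le_one _) (norm_nonneg _) ?_
    rw [Complex.norm_intCast]
    exact_mod_cast abs_moebius_le_one
  have hL : ∀ s : ℂ, 1 < s.re → χ.LFunction s ≠ 0 ∧
      LSeries (fun n : ℕ => χ (n : ZMod N) * (moebius n : ℂ)) s = (χ.LFunction s)⁻¹ := by
    intro s hs
    have h := DirichletCharacter.LSeries.mul_mu_eq_one χ hs
    rw [← DirichletCharacter.LFunction_eq_LSeries χ hs] at h
    exact ⟨left_ne_zero_of_mul_eq_one h, eq_inv_of_mul_eq_one_right h⟩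
  by_cases hχ : χ = 1
  · -- `1 / L(s, χ) = (s - 1) / ((s - 1) L(s, χ))`, and the denominator is entire and nonzero
    -- for `re s ≥ 1`
    subst hχ
    refine tendsto_mean_zero_of_LSeries_continuousOn hf
      (F := fun s => (s - 1) / DirichletCharacter.LFunctionTrivChar₁ N s) ?_ fun s hs => ?_
    · refine ContinuousOn.div (by fun_prop)
        (DirichletCharacter.differentiable_LFunctionTrivChar₁ N).continuous.continuousOn
        fun s hs => ?_
      rcases eq_or_ne s 1 with rfl | h1
      · exact DirichletCharacter.LFunctionTrivChar₁_apply_one_ne_zero N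
      · rw [DirichletCharacter.LFunctionTrivChar₁, Function.update_of_ne h1]
        exact mul_ne_zero (sub_ne_zero.2 h1)
          (DirichletCharacter.LFunction_ne_zero_of_one_le_re 1 (Or.inr h1) hs)
    · have h1 : s ≠ 1 := fun h => by rw [h] at hs; norm_num at hs
      rw [(hL s hs).2, DirichletCharacter.LFunctionTrivChar₁, Function.update_of_ne h1,
        ← div_div, div_self (sub_ne_zero.2 h1), one_div]
  · refine tendsto_mean_zero_of_LSeries_continuousOn hf (F := fun s => (χ.LFunction s)⁻¹) ?_
      fun s hs => (hL s hs).2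
    exact (DirichletCharacter.differentiable_LFunction hχ).continuous.continuousOn.inv₀
      fun s hs => DirichletCharacter.LFunction_ne_zero_of_one_le_re χ (Or.inl hχ) hs

/-! ### Residue classes and periodic sequences -/

open ArithmeticFunction in
/-- Expand the indicator of a reduced residue class mod `q` in Dirichlet characters; the condition
`(m, d) = 1` is absorbed by raising the level of the characters to `q * d`. -/
lemma tendsto_mean_moebius_coprime_modEq {d q r : ℕ} (hd : 0 < d) (hq : 0 < q)
    (hr : r.Coprime q) :
    Tendsto (fun M : ℕ => (1 / (M : ℂ)) * ∑ m ∈ Icc 1 M,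
      if m.Coprime d ∧ m ≡ r [MOD q] then (moebius m : ℂ) else 0) atTop (𝓝 0) := by
  have : NeZero q := ⟨hq.ne'⟩
  have : NeZero (q * d) := ⟨(Nat.mul_pos hq hd).ne'⟩
  have hru : IsUnit (r : ZMod q) := (ZMod.isUnit_iff_coprime r q).2 hr
  have hφ : (q.totient : ℂ) ≠ 0 := by exact_mod_cast (Nat.totient_pos.2 hq).ne'
  have hkey : ∀ m : ℕ, (if m.Coprime d ∧ m ≡ r [MOD q] then (moebius m : ℂ) else 0) =
      ∑ χ : DirichletCharacter ℂ q, (q.totient : ℂ)⁻¹ * χ (r : ZMod q)⁻¹ *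
        (DirichletCharacter.changeLevel (dvd_mul_right q d) χ (m : ZMod (q * d)) *
          (moebius m : ℂ)) := by
    intro m
    by_cases hm : m.Coprime (q * d)
    · have h1 : ∀ χ : DirichletCharacter ℂ q,
          DirichletCharacter.changeLevel (dvd_mul_right q d) χ (m : ZMod (q * d)) =
            χ (m : ZMod q) := fun χ => by
        have := DirichletCharacter.changeLevel_eq_cast_of_dvd' χ (dvd_mul_right q d) (a := m)
          (Nat.isCoprime_iff_coprime.2 hm)
        simpa using this
      have h2 : ∑ χ : DirichletCharacter ℂ q, (q.totient : ℂ)⁻¹ * χ (r : ZMod q)⁻¹ *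
          (DirichletCharacter.changeLevel (dvd_mul_right q d) χ (m : ZMod (q * d)) *
            (moebius m : ℂ)) =
          (q.totient : ℂ)⁻¹ * (∑ χ : DirichletCharacter ℂ q,
            χ (r : ZMod q)⁻¹ * χ (m : ZMod q)) * (moebius m : ℂ) := by
        rw [mul_sum, sum_mul]
        refine sum_congr rfl fun χ _ => ?_
        rw [h1]; ring
      rw [h2, DirichletCharacter.sum_char_inv_mul_char_eq ℂ hru]
      have h3 : ((r : ZMod q) = m) ↔ m ≡ r [MOD q] := by
        rw [eq_comm, ZMod.natCast_eq_natCast_iff]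
      have h4 : m.Coprime d := Nat.Coprime.coprime_mul_left_right hm
      by_cases h5 : m ≡ r [MOD q]
      · rw [if_pos ⟨h4, h5⟩, if_pos (h3.2 h5), inv_mul_cancel₀ hφ, one_mul]
      · rw [if_neg (fun h => h5 h.2), if_neg (fun h => h5 (h3.1 h)), mul_zero, zero_mul]
    · rw [if_neg, eq_comm]
      · refine sum_eq_zero fun χ _ => ?_
        rw [MulChar.map_nonunit _ (fun h => hm ((ZMod.isUnit_iff_coprime m _).1 h)), zero_mul,
          mul_zero]
      · rintro ⟨h1, h2⟩
        refine hm (Nat.Coprime.mul_right ?_ h1)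
        rw [Nat.Coprime, h2.gcd_eq]; exact hr
  simp_rw [hkey]
  have hlim := tendsto_finsetSum (univ : Finset (DirichletCharacter ℂ q)) fun χ _ =>
    (tendsto_mean_char_mul_moebius
      (DirichletCharacter.changeLevel (dvd_mul_right q d) χ)).const_mul
        ((q.totient : ℂ)⁻¹ * χ (r : ZMod q)⁻¹)
  simp only [mul_zero, sum_const_zero] at hlim
  refine hlim.congr fun M => ?_
  rw [sum_comm, mul_sum]
  refine sum_congr rfl fun χ _ => ?_
  rw [← mul_sum]; ring

open ArithmeticFunction in
/-- For an arbitrary residue `r` mod `q`, let `d = (r, q)`. Every `n ≡ r` is of the form `n = d m`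
with `m` in a reduced class mod `q / d`, and `μ(d m)` is `μ(d) μ(m)` or `0` according to whether
`(m, d) = 1`. -/
lemma tendsto_mean_moebius_modEq {q : ℕ} (hq : 0 < q) (r : ℕ) :
    Tendsto (fun N : ℕ => (1 / (N : ℂ)) * ∑ n ∈ Icc 1 N,
      if n ≡ r [MOD q] then (moebius n : ℂ) else 0) atTop (𝓝 0) := by
  obtain ⟨d, r', q', hd, hco, rfl, rfl⟩ : ∃ d r' q' : ℕ, 0 < d ∧ r'.Coprime q' ∧
      r = d * r' ∧ q = d * q' := by
    have hd : 0 < r.gcd q := Nat.gcd_pos_of_pos_right _ hq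
    obtain ⟨r', q', h1, h2, h3⟩ := Nat.exists_coprime r q
    exact ⟨r.gcd q, r', q', hd, h1, by rw [mul_comm]; exact h2, by rw [mul_comm]; exact h3⟩
  have hq' : 0 < q' := Nat.pos_of_mul_pos_left hq
  have hmu : ∀ m : ℕ, (moebius (d * m) : ℂ) =
      if m.Coprime d then (moebius d : ℂ) * (moebius m : ℂ) else 0 := by
    intro m
    split_ifs with h
    · rw [isMultiplicative_moebius.map_mul_of_coprime h.symm]; push_cast; rfl
    · rw [moebius_eq_zero_of_not_squarefree]
      · simp
      · exact fun hs => h (Nat.squarefree_mul_iff.1 hs).1.symm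
  set T : ℕ → ℂ := fun M => ∑ m ∈ Icc 1 M,
      if m.Coprime d ∧ m ≡ r' [MOD q'] then (moebius m : ℂ) else 0 with hT
  have hsum : ∀ N : ℕ, (∑ n ∈ Icc 1 N,
      if n ≡ d * r' [MOD d * q'] then (moebius n : ℂ) else 0) = (moebius d : ℂ) * T (N / d) := by
    intro N
    have h1 : ∑ n ∈ (Icc 1 (N / d)).image (d * ·),
        (if n ≡ d * r' [MOD d * q'] then (moebius n : ℂ) else 0) = ∑ n ∈ Icc 1 N,
        if n ≡ d * r' [MOD d * q'] then (moebius n : ℂ) else 0 := by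
      refine sum_subset ?_ ?_
      · intro n hn
        obtain ⟨m, hm, rfl⟩ := mem_image.1 hn
        rw [mem_Icc] at hm ⊢
        refine ⟨Nat.mul_pos hd hm.1, ?_⟩
        rw [mul_comm]
        exact (Nat.le_div_iff_mul_le hd).1 hm.2
      · intro n hn hn'
        refine if_neg fun h => hn' ?_
        have hdn : d ∣ n := (h.dvd_iff (dvd_mul_right d q')).2 (dvd_mul_right d r')
        obtain ⟨m, rfl⟩ := hdn
        rw [mem_Icc] at hn
        refine mem_image.2 ⟨m, mem_Icc.2 ⟨Nat.pos_of_mul_pos_left hn.1, ?_⟩, rfl⟩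
        rw [Nat.le_div_iff_mul_le hd, mul_comm]; exact hn.2
    rw [← h1, sum_image (fun x _ y _ h => Nat.eq_of_mul_eq_mul_left hd h), hT, mul_sum]
    refine sum_congr rfl fun m _ => ?_
    have h2 : d * m ≡ d * r' [MOD d * q'] ↔ m ≡ r' [MOD q'] :=
      Nat.ModEq.mul_left_cancel_iff' hd.ne'
    simp only [h2, hmu]
    by_cases h3 : m ≡ r' [MOD q'] <;> by_cases h4 : m.Coprime d <;> simp [h3, h4]
  have hT0 := (tendsto_mean_moebius_coprime_modEq hd hq' hco).comp
    (Nat.tendsto_div_const_atTop hd.ne')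
  have hT1 := (hT0.norm.const_mul ‖(moebius d : ℂ)‖)
  rw [norm_zero, mul_zero] at hT1
  refine squeeze_zero_norm (fun N => ?_) hT1
  rw [hsum]
  simp only [Function.comp_apply]
  change ‖1 / (N : ℂ) * (_ * T (N / d))‖ ≤ _ * ‖1 / ((N / d : ℕ) : ℂ) * T (N / d)‖
  rw [mul_left_comm, norm_mul, norm_mul, norm_mul (1 / ((N / d : ℕ) : ℂ))]
  refine mul_le_mul_of_nonneg_left ?_ (norm_nonneg _)
  rcases Nat.eq_zero_or_pos (N / d) with h0 | h0
  · simp [h0, hT]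
  · refine mul_le_mul_of_nonneg_right ?_ (norm_nonneg _)
    rw [norm_div, norm_div, norm_one, Complex.norm_natCast, Complex.norm_natCast]
    exact one_div_le_one_div_of_le (by exact_mod_cast h0) (by exact_mod_cast Nat.div_le_self N d)

/-- **Sarnak's conjecture for periodic sequences**: if `(a_n)` is a periodic
sequence of complex numbers, then `(1/N) ∑_{n=1}^{N} μ(n) a_n → 0`. -/
theorem sarnak_periodic (a : ℕ → ℂ) (q : ℕ) (hq : 1 ≤ q)
    (ha : ∀ n : ℕ, a (n + q) = a n) :
    Tendsto
      (fun N : ℕ => (1 / (N : ℂ)) *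
        ∑ n ∈ Finset.Icc 1 N, (ArithmeticFunction.moebius n : ℂ) * a n)
      atTop (nhds 0) := by
  have hper : Function.Periodic a q := ha
  have hdec : ∀ n : ℕ, (ArithmeticFunction.moebius n : ℂ) * a n = ∑ r ∈ range q,
      a r * if n ≡ r [MOD q] then (ArithmeticFunction.moebius n : ℂ) else 0 := by
    intro n
    rw [sum_eq_single (n % q)]
    · rw [if_pos (Nat.mod_modEq n q).symm, hper.map_mod_nat, mul_comm]
    · intro r hr hne
      rw [if_neg, mul_zero]
      intro h
      exact hne (by rw [show n % q = r % q from h, Nat.mod_eq_of_lt (mem_range.1 hr)])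
    · intro h
      exact absurd (mem_range.2 (Nat.mod_lt n hq)) h
  have hlim := tendsto_finsetSum (range q) fun r _ =>
    (tendsto_mean_moebius_modEq hq r).const_mul (a r)
  simp only [mul_zero, sum_const_zero] at hlim
  refine hlim.congr fun N => ?_
  simp_rw [hdec]
  rw [sum_comm, mul_sum]
  refine sum_congr rfl fun r _ => ?_
  rw [← mul_sum]; ring
end
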